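/- For every odd integer n ≥ 9, there exists a deeply critical oriented clique on n vertices. -/

import Mathlib

/-- An oriented graph: a directed graph whose arc relation is irreflexive and
antisymmetric (no loops, and never both arcs `xy` and `yx`). -/
structure OrientedGraph (V : Type) where
  adj : V → V → Prop
  irrefl : ∀ v, ¬ adj v v
  antisymm : ∀ u v, adj u v → ¬ adj v u

namespace OrientedGraph

variable {V : Type}

/-- An oriented `k`-colouring of `G`. -/
def IsColoring (G : OrientedGraph V) {k : ℕ} (φ : V → Fin k) : Prop :=
  (∀ x y, G.adj x y → φ x ≠ φ y) ∧
  (∀ x y u v, G.adj x y → G.adj u v → φ x = φ v → φ y ≠ φ u)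

/-- The oriented chromatic number: the least `k` admitting an oriented `k`-colouring. -/
noncomputable def chromNum (G : OrientedGraph V) : ℕ :=
  sInf {k : ℕ | ∃ φ : V → Fin k, G.IsColoring φ}

/-- `G` with the arc `xy` removed. -/
def deleteArc (G : OrientedGraph V) (x y : V) : OrientedGraph V where
  adj a b := G.adj a b ∧ ¬(a = x ∧ b = y)
  irrefl v h := G.irrefl v h.1
  antisymm u v h h' := G.antisymm u v h.1 h'.1

/-- An absolute oriented clique: `χo(G) = |V(G)|`. -/
def IsAbsoluteClique (G : OrientedGraph V) : Prop :=
  G.chromNum = Nat.card V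

/-- A deeply critical oriented graph: removing any arc drops `χo` by exactly 2. -/
def IsDeeplyCritical (G : OrientedGraph V) : Prop :=
  ∀ x y, G.adj x y → (G.deleteArc x y).chromNum = G.chromNum - 2

/-- A deeply critical oriented clique. -/
def IsDeeplyCriticalClique (G : OrientedGraph V) : Prop :=
  G.IsDeeplyCritical ∧ G.IsAbsoluteClique

/-- An extending partition `X 0 ⊔ X 1 ⊔ X 2` of `G` (indices mod 3). -/
def IsExtendingPartition (G : OrientedGraph V) (X : Fin 3 → Set V) : Prop :=
  (∀ v : V, ∃! i : Fin 3, v ∈ X i) ∧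
  (∀ i : Fin 3, ∀ u ∈ X (i + 1), ∀ v ∈ X i, ¬ G.adj u v) ∧
  (∀ i : Fin 3, ∀ u ∈ X i, ∃ v ∈ X (i + 1), {w | w ∈ X i ∧ G.adj w v} = {u}) ∧
  (∀ i : Fin 3, ∀ v ∈ X (i + 1), ∃ u ∈ X i, {w | w ∈ X (i + 1) ∧ G.adj u w} = {v})

/-- An oriented graph is extendable when it admits an extending partition. -/
def Extendable (G : OrientedGraph V) : Prop :=
  ∃ X : Fin 3 → Set V, G.IsExtendingPartition X

/-- Induced subgraph on the vertices satisfying `P`. -/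
def induce (G : OrientedGraph V) (P : V → Prop) : OrientedGraph {v // P v} where
  adj a b := G.adj a.1 b.1
  irrefl a := G.irrefl a.1
  antisymm a b h := G.antisymm a.1 b.1 h

end OrientedGraph

/-- The new vertex `xᵢ⁻` of the 6-extension (for `i ∈ Fin 3`, representing `X_{i+1}`). -/
abbrev xminus (i : Fin 3) : Fin 6 := ⟨2 * i.1, by omega⟩

/-- The new vertex `xᵢ⁺` of the 6-extension. -/
abbrev xplus (i : Fin 3) : Fin 6 := ⟨2 * i.1 + 1, by omega⟩

/-- The arcs among the six new vertices:
`x₁⁻x₂⁺, x₁⁺x₂⁻, x₂⁻x₃⁺, x₂⁺x₃⁻, x₃⁻x₁⁺, x₃⁺x₁⁻`. -/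
abbrev extraAdj (s t : Fin 6) : Prop :=
  ∃ i : Fin 3, (s = xminus i ∧ t = xplus (i + 1)) ∨ (s = xplus i ∧ t = xminus (i + 1))

lemma extra_irrefl : ∀ s : Fin 6, ¬ extraAdj s s := by decide

lemma extra_antisymm : ∀ s t : Fin 6, extraAdj s t → ¬ extraAdj t s := by decide

/-- The 6-extension of `G` with respect to the partition `X`. -/
def sixExtension {V : Type} (G : OrientedGraph V) (X : Fin 3 → Set V) :
    OrientedGraph (V ⊕ Fin 6) where
  adj a b :=
    match a, b with
    | Sum.inl u, Sum.inl v => G.adj u v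
    | Sum.inr s, Sum.inl v => ∃ i : Fin 3, s = xminus i ∧ v ∈ X i
    | Sum.inl u, Sum.inr s => ∃ i : Fin 3, s = xplus i ∧ u ∈ X i
    | Sum.inr s, Sum.inr t => extraAdj s t
  irrefl v := by
    cases v with
    | inl u => exact G.irrefl u
    | inr s => exact extra_irrefl s
  antisymm a b h h' := by
    cases a with
    | inl u =>
      cases b with
      | inl v => exact G.antisymm u v h h'
      | inr s =>
        obtain ⟨i, hi, -⟩ := h
        obtain ⟨j, hj, -⟩ := h'
        have := congrArg Fin.val (hi.symm.trans hj)
        simp at this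
        omega
    | inr s =>
      cases b with
      | inl v =>
        obtain ⟨i, hi, -⟩ := h
        obtain ⟨j, hj, -⟩ := h'
        have := congrArg Fin.val (hi.symm.trans hj)
        simp at this
        omega
      | inr t => exact extra_antisymm s t h h'

/-- The 4-extension of `G`: the subgraph of the 6-extension induced by deleting
`x₁⁺` and `x₂⁻`. -/
def fourExtension {V : Type} (G : OrientedGraph V) (X : Fin 3 → Set V) :
    OrientedGraph {v : V ⊕ Fin 6 // v ≠ Sum.inr (xplus 0) ∧ v ≠ Sum.inr (xminus 1)} :=
  (sixExtension G X).induce _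

/-- The 2-extension of `G`: the subgraph of the 6-extension induced by deleting
`x₁⁻`, `x₂⁺`, `x₃⁻` and `x₃⁺`. -/
def twoExtension {V : Type} (G : OrientedGraph V) (X : Fin 3 → Set V) :
    OrientedGraph {v : V ⊕ Fin 6 //
      v ≠ Sum.inr (xminus 0) ∧ v ≠ Sum.inr (xplus 1) ∧
      v ≠ Sum.inr (xminus 2) ∧ v ≠ Sum.inr (xplus 2)} :=
  (sixExtension G X).induce _

/-- The oriented circulant graph `C(n, S)`: vertex set `ZMod n`, with an arc from `i`
to `j` whenever `j - i ∈ S`. -/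
def circulant (n : ℕ) (S : Set (ZMod n)) (hS : ∀ k : ZMod n, k ∈ S → -k ∉ S) :
    OrientedGraph (ZMod n) where
  adj i j := j - i ∈ S
  irrefl i h := hS (i - i) h (by simpa using h)
  antisymm i j h h' := hS (j - i) h (by simpa [neg_sub] using h')

namespace DCO

open OrientedGraph

/-- `G` has an oriented `k`-colouring. -/
def Col {V : Type} (G : OrientedGraph V) (k : ℕ) : Prop :=
  ∃ φ : V → Fin k, G.IsColoring φ

/-- `G` has an oriented colouring with two colours less than vertices. -/
def DelCol {V : Type} [Fintype V] (G : OrientedGraph V) : Prop :=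
  ∃ k, k + 2 = Fintype.card V ∧ Col G k

/-- Distance condition characterising absolute oriented cliques. -/
def Clq {V : Type} (G : OrientedGraph V) : Prop :=
  ∀ u v, u ≠ v → G.adj u v ∨ G.adj v u ∨
    (∃ w, G.adj u w ∧ G.adj w v) ∨ (∃ w, G.adj v w ∧ G.adj w u)

/-- A convenient form of being a deeply critical oriented clique. -/
def Good {V : Type} [Fintype V] (G : OrientedGraph V) : Prop :=
  Clq G ∧ ∀ x y, G.adj x y → DelCol (G.deleteArc x y)

lemma col_of_type {V C : Type} [Fintype C] (G : OrientedGraph V) (f : V → C)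
    (h1 : ∀ x y, G.adj x y → f x ≠ f y)
    (h2 : ∀ x y u v, G.adj x y → G.adj u v → f x = f v → f y ≠ f u) :
    Col G (Fintype.card C) := by
  refine ⟨fun v => Fintype.equivFin C (f v), ?_, ?_⟩
  · intro x y h e
    exact h1 x y h ((Fintype.equivFin C).injective e)
  · intro x y u v h h' e e'
    exact h2 x y u v h h' ((Fintype.equivFin C).injective e) ((Fintype.equivFin C).injective e')

lemma good_imp {V : Type} [Fintype V] (G : OrientedGraph V) (h : Good G) :
    G.IsDeeplyCriticalClique := by
  classical
  have hn : G.chromNum = Fintype.card V := by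
    apply le_antisymm
    · apply Nat.sInf_le
      refine col_of_type G (fun v => v) ?_ ?_
      · rintro x y h rfl
        exact G.irrefl _ h
      · rintro x y u v h h' rfl rfl
        exact G.antisymm _ _ h h'
    · have hne : {k : ℕ | ∃ φ : V → Fin k, G.IsColoring φ}.Nonempty := by
        refine ⟨_, col_of_type G (fun v => v) ?_ ?_⟩
        · rintro x y h rfl
          exact G.irrefl _ h
        · rintro x y u v h h' rfl rfl
          exact G.antisymm _ _ h h'
      obtain ⟨φ, hφ1, hφ2⟩ := Nat.sInf_mem hne
      have hinj : Function.Injective φ := by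
        intro u v e
        by_contra hne
        rcases h.1 u v hne with h | h | ⟨w, h, h'⟩ | ⟨w, h, h'⟩
        · exact hφ1 _ _ h e
        · exact hφ1 _ _ h e.symm
        · exact hφ2 _ _ _ _ h h' e rfl
        · exact hφ2 _ _ _ _ h h' e.symm rfl
      simpa [chromNum] using Fintype.card_le_of_injective φ hinj
  refine ⟨?_, by rw [IsAbsoluteClique, hn, Nat.card_eq_fintype_card]⟩
  intro x y hxy
  obtain ⟨k, hk, hcol⟩ := h.2 x y hxy
  rw [hn]
  apply le_antisymm
  · have : (G.deleteArc x y).chromNum ≤ k := Nat.sInf_le hcol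
    omega
  · obtain ⟨φ, hφ1, hφ2⟩ := Nat.sInf_mem (s := {k : ℕ | ∃ φ : V → Fin k,
      (G.deleteArc x y).IsColoring φ}) ⟨k, hcol⟩
    have hinj : Set.InjOn φ (((Finset.univ.erase x).erase y : Finset V) : Set V) := by
      intro u hu v hv e
      simp at hu hv
      by_contra hne
      rcases h.1 u v hne with h | h | ⟨w, h, h'⟩ | ⟨w, h, h'⟩
      · exact hφ1 _ _ ⟨h, by tauto⟩ e
      · exact hφ1 _ _ ⟨h, by tauto⟩ e.symm
      · exact hφ2 _ _ _ _ ⟨h, by tauto⟩ ⟨h', by tauto⟩ e rfl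
      · exact hφ2 _ _ _ _ ⟨h, by tauto⟩ ⟨h', by tauto⟩ e.symm rfl
    have hxy' : x ≠ y := by
      rintro rfl
      exact G.irrefl _ hxy
    have hc := Finset.card_le_card_of_injOn (t := Finset.univ) φ (by simp) hinj
    rw [Finset.card_erase_of_mem (by simp [hxy'.symm]), Finset.card_erase_of_mem (by simp)] at hc
    simp only [Finset.card_univ, Fintype.card_fin] at hc
    change _ ≤ (G.deleteArc x y).chromNum at hc
    omega

/-- Transport of an oriented graph along an equivalence. -/
def tr {V W : Type} (e : W ≃ V) (G : OrientedGraph V) : OrientedGraph W where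
  adj a b := G.adj (e a) (e b)
  irrefl a := G.irrefl (e a)
  antisymm a b := G.antisymm (e a) (e b)

lemma good_tr {V W : Type} [Fintype V] [Fintype W] (e : W ≃ V) (G : OrientedGraph V)
    (h : Good G) : Good (tr e G) := by
  constructor
  · intro u v huv
    rcases h.1 (e u) (e v) (by simpa using huv) with h | h | ⟨w, h, h'⟩ | ⟨w, h, h'⟩
    · exact Or.inl h
    · exact Or.inr (Or.inl h)
    · exact Or.inr (Or.inr (Or.inl ⟨e.symm w, by simpa [tr] using h, by simpa [tr] using h'⟩))
    · exact Or.inr (Or.inr (Or.inr ⟨e.symm w, by simpa [tr] using h, by simpa [tr] using h'⟩))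
  · intro x y hxy
    obtain ⟨k, hk, φ, h1, h2⟩ := h.2 _ _ hxy
    refine ⟨k, by rw [hk, Fintype.card_congr e], fun w => φ (e w), ?_, ?_⟩
    · intro a b hab
      exact h1 _ _ ⟨hab.1, by simpa using hab.2⟩
    · intro a b c d hab hcd
      exact h2 _ _ _ _ ⟨hab.1, by simpa using hab.2⟩ ⟨hcd.1, by simpa using hcd.2⟩

/-- `a`, `b` may receive the same colour. -/
def Indep {V : Type} (G : OrientedGraph V) (a b : V) : Prop :=
  a ≠ b ∧ ¬ G.adj a b ∧ ¬ G.adj b a ∧ ∀ w, ¬ (G.adj a w ∧ G.adj w b) ∧ ¬ (G.adj b w ∧ G.adj w a)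

/-- The pairs `a, b` and `c, d` may be simultaneously identified. -/
def Merge {V : Type} (G : OrientedGraph V) (a b c d : V) : Prop :=
  Indep G a b ∧ Indep G c d ∧ a ≠ c ∧ a ≠ d ∧ b ≠ c ∧ b ≠ d ∧
  ¬ G.adj c a ∧ ¬ G.adj c b ∧ ¬ G.adj d a ∧ ¬ G.adj d b

lemma Merge.delCol {V : Type} [Fintype V] {G : OrientedGraph V} {a b c d : V}
    (h : Merge G a b c d) : DelCol G := by
  classical
  obtain ⟨⟨hab, h1, h2, h3⟩, ⟨hcd, h4, h5, h6⟩, h7, h8, h9, h10, h11, h12, h13, h14⟩ := h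
  let f : V → V := fun z => if z = a then b else if z = c then d else z
  have hf : ∀ z, f z ∈ (Finset.univ.erase a).erase c := by
    intro z
    simp only [f, Finset.mem_erase, Finset.mem_univ, and_true]
    grind
  have hir := G.irrefl
  have han := G.antisymm
  have key := col_of_type G (C := ((Finset.univ.erase a).erase c : Finset V))
    (fun z => ⟨f z, hf z⟩)
    (by
      intro x y hxy e
      have e' : f x = f y := congrArg Subtype.val e
      simp only [f] at e'
      grind)
    (by
      intro x y u v hxy huv e e2
      have e' : f x = f v := congrArg Subtype.val e
      have e2' : f y = f u := congrArg Subtype.val e2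
      simp only [f] at e' e2'
      have := h3 x
      have := h3 y
      have := h3 u
      have := h3 v
      have := h6 x
      have := h6 y
      have := h6 u
      have := h6 v
      have := han x y hxy
      have := hir x
      have := hir y
      clear e e2 h3 h6 hir han hf
      split_ifs at e' e2' <;> grind)
  refine ⟨_, ?_, key⟩
  rw [Fintype.card_coe, Finset.card_erase_of_mem (by simp [h7.symm]),
    Finset.card_erase_of_mem (by simp), Finset.card_univ]
  have : 2 ≤ Fintype.card V := by
    have := Finset.card_le_univ ({a, b} : Finset V)
    rwa [Finset.card_pair hab] at this
  omega

/-- Extending partition, given by its class function. -/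
structure Ext {V : Type} (G : OrientedGraph V) (p : V → Fin 3) : Prop where
  back : ∀ u v, G.adj u v → p u ≠ p v + 1
  out : ∀ u, ∃ v, p v = p u + 1 ∧ G.adj u v ∧ ∀ w, p w = p u → G.adj w v → w = u
  inn : ∀ v, ∃ u, p v = p u + 1 ∧ G.adj u v ∧ ∀ w, p w = p v → G.adj u w → w = v

/-- Arcs of the extension: `X_s → a_s → b_s → X_{s+1}` and `b_{s+1} → a_s`. -/
def extAdj {V ι : Type} (G : OrientedGraph V) (p : V → Fin 3) (c : ι → Fin 3) :
    V ⊕ ι ⊕ ι → V ⊕ ι ⊕ ι → Prop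
  | .inl u, .inl v => G.adj u v
  | .inl u, .inr (.inl s) => p u = c s
  | .inr (.inl s), .inr (.inr t) => c s = c t
  | .inr (.inr t), .inl v => p v = c t + 1
  | .inr (.inr s), .inr (.inl t) => c s = c t + 1
  | _, _ => False

lemma fin3a (i : Fin 3) : i + 1 ≠ i := by revert i; decide
lemma fin3b (i : Fin 3) : i + 1 + 1 ≠ i := by revert i; decide
lemma fin3d (i : Fin 3) : i + 1 + 1 + 1 = i := by revert i; decide
lemma fin3c (i j : Fin 3) : i = j ∨ i = j + 1 ∨ j = i + 1 := by revert i j; decide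
lemma fin3e (i j : Fin 3) (h : i + 1 = j + 1) : i = j := by revert i j; decide

/-- The extension. -/
def extG {V ι : Type} (G : OrientedGraph V) (p : V → Fin 3) (c : ι → Fin 3) :
    OrientedGraph (V ⊕ ι ⊕ ι) where
  adj := extAdj G p c
  irrefl := by
    rintro (u | s | s) h
    · exact G.irrefl u h
    · exact h
    · exact h
  antisymm := by
    rintro (u | s | s) (v | t | t) h h' <;> simp only [extAdj] at h h'
    · exact G.antisymm _ _ h h'
    · exact fin3a _ (h'.symm.trans h.symm)
    · exact fin3a _ (h.symm.trans h'.symm)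

section
variable {V ι : Type} (G : OrientedGraph V) (p : V → Fin 3) (c : ι → Fin 3)

@[simp] lemma adj_vv (u v : V) : (extG G p c).adj (.inl u) (.inl v) ↔ G.adj u v := Iff.rfl
@[simp] lemma adj_va (u : V) (s : ι) :
    (extG G p c).adj (.inl u) (.inr (.inl s)) ↔ p u = c s := Iff.rfl
@[simp] lemma adj_vb (u : V) (s : ι) :
    (extG G p c).adj (.inl u) (.inr (.inr s)) ↔ False := Iff.rfl
@[simp] lemma adj_av (u : V) (s : ι) :
    (extG G p c).adj (.inr (.inl s)) (.inl u) ↔ False := Iff.rfl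
@[simp] lemma adj_bv (u : V) (s : ι) :
    (extG G p c).adj (.inr (.inr s)) (.inl u) ↔ p u = c s + 1 := Iff.rfl
@[simp] lemma adj_aa (s t : ι) :
    (extG G p c).adj (.inr (.inl s)) (.inr (.inl t)) ↔ False := Iff.rfl
@[simp] lemma adj_bb (s t : ι) :
    (extG G p c).adj (.inr (.inr s)) (.inr (.inr t)) ↔ False := Iff.rfl
@[simp] lemma adj_ab (s t : ι) :
    (extG G p c).adj (.inr (.inl s)) (.inr (.inr t)) ↔ c s = c t := Iff.rfl
@[simp] lemma adj_ba (s t : ι) :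
    (extG G p c).adj (.inr (.inr s)) (.inr (.inl t)) ↔ c s = c t + 1 := Iff.rfl
end

lemma ext_nonempty {V : Type} {G : OrientedGraph V} {p : V → Fin 3} (h : Ext G p)
    [Nonempty V] (i : Fin 3) : ∃ v, p v = i := by
  obtain ⟨v0⟩ := ‹Nonempty V›
  obtain ⟨v1, h1, -⟩ := h.out v0
  obtain ⟨v2, h2, -⟩ := h.out v1
  have : i = p v0 ∨ i = p v0 + 1 ∨ i = p v0 + 1 + 1 := by
    generalize p v0 = j
    revert i j; decide
  rcases this with h | h | h
  · exact ⟨v0, h.symm⟩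
  · exact ⟨v1, h1.trans h.symm⟩
  · exact ⟨v2, by rw [h2, h1, h]⟩

lemma ext_clq {V ι : Type} {G : OrientedGraph V} {p : V → Fin 3} (hE : Ext G p) [Nonempty V]
    {c : ι → Fin 3} (hc : Function.Injective c) (hG : Clq G) : Clq (extG G p c) := by
  have va : ∀ (u : V) (s : ι), p u ≠ c s →
      (∃ w, (extG G p c).adj (.inl u) w ∧ (extG G p c).adj w (.inr (.inl s))) ∨
      (∃ w, (extG G p c).adj (.inr (.inl s)) w ∧ (extG G p c).adj w (.inl u)) := by
    intro u s h
    rcases fin3c (p u) (c s) with h1 | h1 | h1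
    · exact absurd h1 h
    · exact Or.inr ⟨.inr (.inr s), by simp, by simpa using h1⟩
    · obtain ⟨v, hv, huv, -⟩ := hE.out u
      exact Or.inl ⟨.inl v, by simpa using huv, by simp [hv, h1]⟩
  have vb : ∀ (u : V) (s : ι), p u ≠ c s + 1 →
      (∃ w, (extG G p c).adj (.inl u) w ∧ (extG G p c).adj w (.inr (.inr s))) ∨
      (∃ w, (extG G p c).adj (.inr (.inr s)) w ∧ (extG G p c).adj w (.inl u)) := by
    intro u s h
    rcases fin3c (p u) (c s + 1) with h1 | h1 | h1
    · exact absurd h1 h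
    · obtain ⟨v, hv, huv, -⟩ := hE.inn u
      exact Or.inr ⟨.inl v, by simpa using fin3e _ _ (hv.symm.trans h1), by simpa using huv⟩
    · exact Or.inl ⟨.inr (.inl s), by simpa using (fin3e _ _ h1).symm, by simp⟩
  have ab : ∀ (s t : ι), (extG G p c).adj (.inr (.inl s)) (.inr (.inr t)) ∨
      (extG G p c).adj (.inr (.inr t)) (.inr (.inl s)) ∨
      (∃ w, (extG G p c).adj (.inr (.inr t)) w ∧ (extG G p c).adj w (.inr (.inl s))) := by
    intro s t
    rcases fin3c (c s) (c t) with h1 | h1 | h1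
    · exact Or.inl h1
    · obtain ⟨v, hv⟩ := ext_nonempty hE (c s)
      exact Or.inr (Or.inr ⟨.inl v, by simp [hv, h1], by simp [hv]⟩)
    · exact Or.inr (Or.inl h1)
  rintro (u | s | s) (v | t | t) huv
  · rcases hG u v (by simpa using huv) with h | h | ⟨w, h, h'⟩ | ⟨w, h, h'⟩
    · exact Or.inl h
    · exact Or.inr (Or.inl h)
    · exact Or.inr (Or.inr (Or.inl ⟨.inl w, h, h'⟩))
    · exact Or.inr (Or.inr (Or.inr ⟨.inl w, h, h'⟩))
  · by_cases h : p u = c t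
    · exact Or.inl h
    · exact Or.inr (Or.inr (va u t h))
  · by_cases h : p u = c t + 1
    · exact Or.inr (Or.inl h)
    · exact Or.inr (Or.inr (vb u t h))
  · by_cases h : p v = c s
    · exact Or.inr (Or.inl h)
    · exact Or.inr (Or.inr (va v s h).symm)
  · have hst : c s ≠ c t := fun h => huv (by rw [hc h])
    rcases fin3c (c s) (c t) with h1 | h1 | h1
    · exact absurd h1 hst
    · exact Or.inr (Or.inr (Or.inl ⟨.inr (.inr s), by simp, by simpa using h1⟩))
    · exact Or.inr (Or.inr (Or.inr ⟨.inr (.inr t), by simp, by simpa using h1⟩))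
  · rcases ab s t with h | h | h
    · exact Or.inl h
    · exact Or.inr (Or.inl h)
    · exact Or.inr (Or.inr (Or.inr h))
  · by_cases h : p v = c s + 1
    · exact Or.inl h
    · exact Or.inr (Or.inr (vb v s h).symm)
  · rcases ab t s with h | h | h
    · exact Or.inr (Or.inl h)
    · exact Or.inl h
    · exact Or.inr (Or.inr (Or.inl h))
  · have hst : c s ≠ c t := fun h => huv (by rw [hc h])
    rcases fin3c (c s) (c t) with h1 | h1 | h1
    · exact absurd h1 hst
    · exact Or.inr (Or.inr (Or.inl ⟨.inr (.inl t), by simpa using h1, by simp⟩))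
    · exact Or.inr (Or.inr (Or.inr ⟨.inr (.inl s), by simpa using h1, by simp⟩))

lemma ext_good {V ι : Type} [Fintype V] [Fintype ι] {G : OrientedGraph V} {p : V → Fin 3}
    (hE : Ext G p) [Nonempty V] {c : ι → Fin 3} (hc : Function.Injective c) (hG : Good G) :
    Good (extG G p c) := by
  refine ⟨ext_clq hE hc hG.1, ?_⟩
  have hb := hE.back
  have hir := G.irrefl
  have hc' : ∀ s t, c s = c t → s = t := fun s t h => hc h
  rintro (u | s | s) (v | t | t) hxy
  · obtain ⟨k, hk, φ, h1, h2⟩ := hG.2 u v hxy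
    refine ⟨k + (Fintype.card ι + Fintype.card ι), ?_, ?_⟩
    · simp only [Fintype.card_sum]; omega
    · have := col_of_type ((extG G p c).deleteArc (.inl u) (.inl v)) (C := Fin k ⊕ ι ⊕ ι)
        (Sum.map φ id) ?_ ?_
      · simpa using this
      · rintro (x | x | x) (y | y | y) ⟨h, h'⟩ <;> simp at h h' ⊢
        · exact h1 x y ⟨h, by simpa using h'⟩
      · rintro (x | x | x) (y | y | y) (z | z | z) (w | w | w) ⟨h, h'⟩ ⟨h3, h4⟩ e e' <;>
          simp at h h' h3 h4 e e'
        · exact h2 x y z w ⟨h, by simpa using h'⟩ ⟨h3, by simpa using h4⟩ e e'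
        all_goals grind [fin3a]
  · -- u → a_t
    obtain ⟨w, hw, hwu, huniq⟩ := hE.inn u
    have hxy' : p u = c t := hxy
    apply Merge.delCol (a := .inl w) (b := .inr (.inl t)) (c := .inl u) (d := .inr (.inr t))
    simp only [Merge, Indep, OrientedGraph.deleteArc, Sum.forall, adj_vv, adj_va, adj_vb, adj_av,
      adj_bv, adj_aa, adj_bb, adj_ab, adj_ba, reduceCtorEq, Sum.inl.injEq, Sum.inr.injEq, ne_eq]
    and_intros <;> grind [fin3a, fin3b, fin3d, fin3e]
  · exact hxy.elim
  · exact hxy.elim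
  · exact hxy.elim
  · -- a_s → b_t
    have hst : s = t := hc hxy
    subst hst
    obtain ⟨w, hw⟩ := ext_nonempty hE (c s)
    obtain ⟨w', hw'⟩ := ext_nonempty hE (c s + 1)
    apply Merge.delCol (a := .inl w) (b := .inr (.inr s)) (c := .inr (.inl s)) (d := .inl w')
    simp only [Merge, Indep, OrientedGraph.deleteArc, Sum.forall, adj_vv, adj_va, adj_vb, adj_av,
      adj_bv, adj_aa, adj_bb, adj_ab, adj_ba, reduceCtorEq, Sum.inl.injEq, Sum.inr.injEq, ne_eq]
    and_intros <;> grind [fin3a, fin3b, fin3d, fin3e]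
  · -- b_s → v
    obtain ⟨w, hw, hwu, huniq⟩ := hE.out v
    have hxy' : p v = c s + 1 := hxy
    apply Merge.delCol (a := .inr (.inl s)) (b := .inl v) (c := .inr (.inr s)) (d := .inl w)
    simp only [Merge, Indep, OrientedGraph.deleteArc, Sum.forall, adj_vv, adj_va, adj_vb, adj_av,
      adj_bv, adj_aa, adj_bb, adj_ab, adj_ba, reduceCtorEq, Sum.inl.injEq, Sum.inr.injEq, ne_eq]
    and_intros <;> grind [fin3a, fin3b, fin3d, fin3e]
  · -- b_s → a_t
    have hxy' : c s = c t + 1 := hxy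
    apply Merge.delCol (a := .inr (.inl s)) (b := .inr (.inl t)) (c := .inr (.inr s))
      (d := .inr (.inr t))
    simp only [Merge, Indep, OrientedGraph.deleteArc, Sum.forall, adj_vv, adj_va, adj_vb, adj_av,
      adj_bv, adj_aa, adj_bb, adj_ab, adj_ba, reduceCtorEq, Sum.inl.injEq, Sum.inr.injEq, ne_eq]
    and_intros <;> grind [fin3a, fin3b, fin3d, fin3e]
  · exact hxy.elim

lemma ext_ext {V : Type} {G : OrientedGraph V} {p : V → Fin 3} (hE : Ext G p) :
    Ext (extG G p (id : Fin 3 → Fin 3)) (Sum.elim p (Sum.elim id (fun s => s + 1))) := by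
  constructor
  · rintro (u | s | s) (v | t | t) h <;> simp at h ⊢
    · exact hE.back u v h
    all_goals grind [fin3a, fin3b, fin3d, fin3e]
  · rintro (u | s | s)
    · obtain ⟨v, h1, h2, h3⟩ := hE.out u
      refine ⟨.inl v, h1, h2, ?_⟩
      rintro (w | t | t) hw hwv <;> simp at hw hwv ⊢
      · exact h3 w hw hwv
      · grind [fin3a, fin3b, fin3d, fin3e]
    · refine ⟨.inr (.inr s), by simp, by simp, ?_⟩
      rintro (w | t | t) hw hwv <;> simp at hw hwv ⊢
      exact hw
    · refine ⟨.inr (.inl (s + 1 + 1)), by simp, by simp [fin3d], ?_⟩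
      rintro (w | t | t) hw hwv <;> simp at hw hwv ⊢
      · grind [fin3a, fin3b, fin3d, fin3e]
      · exact hw
  · rintro (u | s | s)
    · obtain ⟨v, h1, h2, h3⟩ := hE.inn u
      refine ⟨.inl v, h1, h2, ?_⟩
      rintro (w | t | t) hw hwv <;> simp at hw hwv ⊢
      · exact h3 w hw hwv
      · grind [fin3a, fin3b, fin3d, fin3e]
    · refine ⟨.inr (.inr (s + 1)), by simp [fin3d], by simp, ?_⟩
      rintro (w | t | t) hw hwv <;> simp at hw hwv ⊢
      · grind [fin3a, fin3b, fin3d, fin3e]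
      · exact hw
    · refine ⟨.inr (.inl s), by simp, by simp, ?_⟩
      rintro (w | t | t) hw hwv <;> simp at hw hwv ⊢
      exact hw

/-- The base graph on nine vertices. -/
def base : OrientedGraph (Fin 9) where
  adj u v := (u.1 / 3 = v.1 / 3 ∧ v.1 = u.1 + 1) ∨
    (v.1 / 3 = (u.1 / 3 + 1) % 3 ∧ u.1 % 3 + v.1 % 3 = 2)
  irrefl := by decide
  antisymm := by decide

instance : DecidableRel base.adj := fun u v => by unfold base; infer_instance

lemma base_ext : Ext base (fun u => ⟨u.1 / 3, by omega⟩) := by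
  constructor <;> decide

instance (x y : Fin 9) : DecidableRel (base.deleteArc x y).adj := fun u v => by
  unfold OrientedGraph.deleteArc; infer_instance

instance (x y a b : Fin 9) : Decidable (Indep (base.deleteArc x y) a b) := by
  unfold Indep; infer_instance

instance (x y a b c d : Fin 9) : Decidable (Merge (base.deleteArc x y) a b c d) := by
  unfold Merge; infer_instance

lemma base_clq : Clq base := by
  unfold Clq; decide

/-- Pairs to identify after removing an arc leaving one of the vertices `0, 1, 2`. -/
def wit (x y : ℕ) : ℕ × ℕ × ℕ × ℕ :=
  if x = 0 then (if y = 1 then (8, 1, 2, 0) else (8, 5, 6, 0))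
  else if x = 1 then (if y = 2 then (2, 0, 3, 1) else (4, 0, 5, 1))
  else (3, 1, 4, 2)

/-- Rotation of a vertex to the block of `x`. -/
def rot (x : Fin 9) (k : ℕ) : Fin 9 := ⟨(3 * (x.1 / 3) + k) % 9, Nat.mod_lt _ (by decide)⟩

lemma base_merge : ∀ x y : Fin 9, base.adj x y → Merge (base.deleteArc x y)
    (rot x (wit (x.1 % 3) (y.1 % 3)).1) (rot x (wit (x.1 % 3) (y.1 % 3)).2.1)
    (rot x (wit (x.1 % 3) (y.1 % 3)).2.2.1) (rot x (wit (x.1 % 3) (y.1 % 3)).2.2.2) := by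
  decide +kernel

lemma base_good : Good base := by
  refine ⟨base_clq, fun x y h => (base_merge x y h).delCol⟩

/-- There are extendable good graphs on `9 + 6 k` vertices. -/
lemma chain (k : ℕ) : ∃ (V : Type) (_ : Fintype V) (G : OrientedGraph V) (p : V → Fin 3),
    Fintype.card V = 9 + 6 * k ∧ Good G ∧ Ext G p := by
  induction k with
  | zero => exact ⟨_, inferInstance, base, _, by simp, base_good, base_ext⟩
  | succ k ih =>
    obtain ⟨V, _, G, p, hc, hG, hE⟩ := ih
    have : Nonempty V := Fintype.card_pos_iff.1 (by omega)
    refine ⟨_, inferInstance, _, _, ?_, ext_good hE (c := (id : Fin 3 → Fin 3))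
      Function.injective_id hG, ext_ext hE⟩
    simp only [Fintype.card_sum, hc, Fintype.card_fin]
    omega

lemma exists_good (k r : ℕ) (hr : r ≤ 3) : ∃ (V : Type) (_ : Fintype V) (G : OrientedGraph V),
    Fintype.card V = 9 + 6 * k + 2 * r ∧ Good G := by
  obtain ⟨V, _, G, p, hc, hG, hE⟩ := chain k
  have : Nonempty V := Fintype.card_pos_iff.1 (by omega)
  refine ⟨_, inferInstance, _, ?_, ext_good hE (c := Fin.castLE hr)
    (Fin.castLE_injective hr) hG⟩
  simp only [Fintype.card_sum, hc, Fintype.card_fin]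
  omega

end DCO

/-- For every odd integer `n ≥ 9`, there exists a deeply critical oriented
clique on `n` vertices. -/
theorem stmt1 (n : ℕ) (hn : 9 ≤ n) (hodd : Odd n) :
    ∃ G : OrientedGraph (Fin n), G.IsDeeplyCriticalClique := by
  obtain ⟨m, hm⟩ := hodd
  obtain ⟨V, _, G, hc, hG⟩ := DCO.exists_good ((m - 4) / 3) ((m - 4) % 3) (by omega)
  have hcard : Fintype.card (Fin n) = Fintype.card V := by
    rw [hc, Fintype.card_fin]
    omega
  exact ⟨_, DCO.good_imp _ (DCO.good_tr (Fintype.equivOfCardEq hcard) G hG)⟩
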